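/- Fourth-order two-body error term (paper eq. A17c): for i ≠ j and any phase-space point (x,p) with r_ij ≠ 0, the left-nested canonical Poisson bracket satisfies {{{{T, V_ij}, T}, V_ij}, T}(x,p) = 4 (G² (m i)(m j)((m i)+(m j)) / r_ij⁸) · ( 6 (v_ij · x_ij)² − r_ij² ‖v_ij‖² ). -/

import Mathlib

open scoped RealInnerProductSpace BigOperators

noncomputable section

/-- Three-dimensional Euclidean space. -/
abbrev E3 : Type := EuclideanSpace ℝ (Fin 3)

/-- Phase space for `N` particles: positions and momenta. -/
abbrev Phase (N : ℕ) : Type := (Fin N → E3) × (Fin N → E3)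

/-- Gradient of a phase-space function with respect to the `k`-th position. -/
def gradPos {N : ℕ} (A : Phase N → ℝ) (k : Fin N) (w : Phase N) : E3 :=
  gradient (fun y => A (Function.update w.1 k y, w.2)) (w.1 k)

/-- Gradient of a phase-space function with respect to the `k`-th momentum. -/
def gradMom {N : ℕ} (A : Phase N → ℝ) (k : Fin N) (w : Phase N) : E3 :=
  gradient (fun y => A (w.1, Function.update w.2 k y)) (w.2 k)

/-- Canonical Poisson bracket of two phase-space functions. -/
def poisson {N : ℕ} (A B : Phase N → ℝ) (w : Phase N) : ℝ :=
  ∑ k, (⟪gradPos A k w, gradMom B k w⟫ - ⟪gradMom A k w, gradPos B k w⟫)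

/-- Kinetic energy `T = Σ_i ‖p_i‖²/(2 m_i)`. -/
def kinetic {N : ℕ} (m : Fin N → ℝ) (w : Phase N) : ℝ :=
  ∑ i, ‖w.2 i‖ ^ 2 / (2 * m i)

/-- Pair potential `V_ij = −G m_i m_j / ‖x_i − x_j‖`. -/
def pairPot {N : ℕ} (G : ℝ) (m : Fin N → ℝ) (i j : Fin N) (w : Phase N) : ℝ :=
  -(G * m i * m j) / ‖w.1 i - w.1 j‖

/-- Relative position. -/
def relPos {N : ℕ} (i j : Fin N) (w : Phase N) : E3 := w.1 i - w.1 j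

/-- Relative velocity. -/
def relVel {N : ℕ} (m : Fin N → ℝ) (i j : Fin N) (w : Phase N) : E3 :=
  (m i)⁻¹ • w.2 i - (m j)⁻¹ • w.2 j

/-- Sign of particle `k` in the pair `(i, j)`. -/
def sgnc {N : ℕ} (i j k : Fin N) : ℝ := (if k = i then 1 else 0) - (if k = j then 1 else 0)

lemma hasGradientAt_affine (h : E3 → ℝ) (g u a : E3) (c : ℝ) (hg : HasGradientAt h g u) :
    HasGradientAt (fun y => h (u + c • (y - a))) (c • g) a := by
  have h1 : HasFDerivAt (fun y : E3 => u + c • (y - a)) (c • ContinuousLinearMap.id ℝ E3) a :=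
    (((hasFDerivAt_id a).sub_const a).const_smul c).const_add u
  have h2 : HasFDerivAt h (InnerProductSpace.toDual ℝ E3 g) (u + c • (a - a)) := by
    simpa using hg.hasFDerivAt
  have h3 := h2.comp a h1
  rw [hasGradientAt_iff_hasFDerivAt]
  refine h3.congr_fderiv ?_
  ext y
  simp [inner_smul_left, inner_smul_right]

lemma update_pos {N : ℕ} (i j k : Fin N) (x : Fin N → E3) (y : E3) :
    Function.update x k y i - Function.update x k y j
      = (x i - x j) + sgnc i j k • (y - x k) := by
  unfold sgnc
  by_cases h1 : k = i <;> by_cases h2 : k = j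
  · subst h1; subst h2; simp
  · subst h1; simp [h2, Function.update_of_ne (Ne.symm h2)]
  · subst h2; simp [h1, Function.update_of_ne (Ne.symm h1)]
  · simp [h1, h2, Function.update_of_ne (Ne.symm h1), Function.update_of_ne (Ne.symm h2)]

lemma update_mom {N : ℕ} (m : Fin N → ℝ) (i j k : Fin N) (x : Fin N → E3) (y : E3) :
    (m i)⁻¹ • Function.update x k y i - (m j)⁻¹ • Function.update x k y j
      = ((m i)⁻¹ • x i - (m j)⁻¹ • x j) + (sgnc i j k * (m k)⁻¹) • (y - x k) := by
  unfold sgnc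
  by_cases h1 : k = i <;> by_cases h2 : k = j
  · subst h1; subst h2; simp
  · subst h1; simp [h2, Function.update_of_ne (Ne.symm h2)]; module
  · subst h2; simp [h1, Function.update_of_ne (Ne.symm h1)]; module
  · simp [h1, h2, Function.update_of_ne (Ne.symm h1), Function.update_of_ne (Ne.symm h2)]

lemma gradPos_rel {N : ℕ} (m : Fin N → ℝ) (i j k : Fin N) (A : Phase N → ℝ)
    (f : E3 → E3 → ℝ) (hA : ∀ w, relPos i j w ≠ 0 → A w = f (relPos i j w) (relVel m i j w))
    (w : Phase N) (hw : relPos i j w ≠ 0) (g : E3)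
    (hg : HasGradientAt (fun u => f u (relVel m i j w)) g (relPos i j w)) :
    gradPos A k w = sgnc i j k • g := by
  unfold gradPos
  apply HasGradientAt.gradient
  have h := hasGradientAt_affine _ g _ (w.1 k) (sgnc i j k) hg
  refine h.congr_of_eventuallyEq ?_
  have hc : ContinuousAt (fun y : E3 => relPos i j w + sgnc i j k • (y - w.1 k)) (w.1 k) := by
    fun_prop
  have hne := hc.eventually_ne (y := 0) (by simpa using hw)
  filter_upwards [hne] with y hy
  have e : relPos i j (Function.update w.1 k y, w.2)
      = relPos i j w + sgnc i j k • (y - w.1 k) := update_pos i j k w.1 y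
  rw [hA _ (by rw [e]; exact hy), e]
  rfl

lemma gradMom_rel {N : ℕ} (m : Fin N → ℝ) (i j k : Fin N) (A : Phase N → ℝ)
    (f : E3 → E3 → ℝ) (hA : ∀ w, relPos i j w ≠ 0 → A w = f (relPos i j w) (relVel m i j w))
    (w : Phase N) (hw : relPos i j w ≠ 0) (g : E3)
    (hg : HasGradientAt (fun v => f (relPos i j w) v) g (relVel m i j w)) :
    gradMom A k w = (sgnc i j k * (m k)⁻¹) • g := by
  unfold gradMom
  apply HasGradientAt.gradient
  have h := hasGradientAt_affine _ g _ (w.2 k) (sgnc i j k * (m k)⁻¹) hg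
  refine h.congr_of_eventuallyEq ?_
  filter_upwards with y
  have e : relVel m i j (w.1, Function.update w.2 k y)
      = relVel m i j w + (sgnc i j k * (m k)⁻¹) • (y - w.2 k) := update_mom m i j k w.2 y
  have hp : relPos i j (w.1, Function.update w.2 k y) ≠ 0 := hw
  rw [hA _ hp, e]
  rfl

lemma gradPos_kinetic {N : ℕ} (m : Fin N → ℝ) (k : Fin N) (w : Phase N) :
    gradPos (kinetic m) k w = 0 := by
  unfold gradPos kinetic
  exact (hasGradientAt_const (F := E3) (𝕜 := ℝ) (w.1 k)
    (∑ i, ‖w.2 i‖ ^ 2 / (2 * m i))).gradient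

lemma gradMom_kinetic {N : ℕ} (m : Fin N → ℝ) (hm : ∀ i, 0 < m i) (k : Fin N) (w : Phase N) :
    gradMom (kinetic m) k w = (m k)⁻¹ • w.2 k := by
  unfold gradMom kinetic
  apply HasGradientAt.gradient
  have e : (fun y : E3 => ∑ i, ‖Function.update w.2 k y i‖ ^ 2 / (2 * m i))
      = fun y => (2 * m k)⁻¹ * ‖y‖ ^ 2
          + ∑ i ∈ Finset.univ.erase k, ‖w.2 i‖ ^ 2 / (2 * m i) := by
    funext y
    rw [← Finset.add_sum_erase _ _ (Finset.mem_univ k)]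
    congr 1
    · simp [div_eq_inv_mul]
    · refine Finset.sum_congr rfl fun i hi => ?_
      rw [Function.update_of_ne (Finset.ne_of_mem_erase hi)]
  simp only [e]
  rw [hasGradientAt_iff_hasFDerivAt]
  have h := ((hasStrictFDerivAt_norm_sq (w.2 k)).hasFDerivAt.const_mul (2 * m k)⁻¹).add_const
    (∑ i ∈ Finset.univ.erase k, ‖w.2 i‖ ^ 2 / (2 * m i))
  refine h.congr_fderiv ?_
  ext y
  have := (hm k).ne'
  simp [inner_smul_left]
  try field_simp

lemma hasFDerivAt_norm' (u : E3) (hu : u ≠ 0) :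
    HasFDerivAt (fun y : E3 => ‖y‖) (‖u‖⁻¹ • innerSL ℝ u) u := by
  have h := (hasStrictFDerivAt_norm_sq u).hasFDerivAt.sqrt (by simpa using hu)
  simp only [Real.sqrt_sq (norm_nonneg _)] at h
  refine h.congr_fderiv ?_
  ext y
  have : ‖u‖ ≠ 0 := by simpa using hu
  simp
  try field_simp

lemma hasFDerivAt_inv_pow (n : ℕ) (u : E3) (hu : u ≠ 0) :
    HasFDerivAt (fun y : E3 => (‖y‖ ^ n)⁻¹)
      ((-(n : ℝ) * (‖u‖ ^ (n + 2))⁻¹) • innerSL ℝ u) u := by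
  have hn : ‖u‖ ≠ 0 := by simpa using hu
  have h1 : HasDerivAt (fun t : ℝ => (t ^ n)⁻¹) _ ‖u‖ :=
    (hasDerivAt_pow n ‖u‖).inv (pow_ne_zero n hn)
  have h := h1.comp_hasFDerivAt u (hasFDerivAt_norm' u hu)
  refine h.congr_fderiv ?_
  rw [smul_smul]
  congr 1
  rcases n with _ | n
  · simp
  · simp only [Nat.add_sub_cancel]
    field_simp
    ring

lemma grad_pot (K : ℝ) (u : E3) (hu : u ≠ 0) :
    HasGradientAt (fun y : E3 => -K / ‖y‖) ((K * (‖u‖ ^ 3)⁻¹) • u) u := by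
  rw [hasGradientAt_iff_hasFDerivAt]
  have h := (hasFDerivAt_inv_pow 1 u hu).const_mul (-K)
  simp only [pow_one, ← div_eq_mul_inv] at h
  refine h.congr_fderiv ?_
  ext y
  simp [inner_smul_left]
  try ring

lemma grad_u (C : ℝ) (n : ℕ) (u v : E3) (hu : u ≠ 0) :
    HasGradientAt (fun y : E3 => C * (⟪v, y⟫ * (‖y‖ ^ n)⁻¹))
      (C • ((‖u‖ ^ n)⁻¹ • v - (n * ⟪v, u⟫ * (‖u‖ ^ (n + 2))⁻¹) • u)) u := by
  rw [hasGradientAt_iff_hasFDerivAt]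
  have h := (((innerSL ℝ v).hasFDerivAt (x := u)).mul (hasFDerivAt_inv_pow n u hu)).const_mul C
  refine h.congr_fderiv ?_
  ext y
  simp [inner_smul_left, inner_sub_left]
  try ring

lemma grad_v (K a b : ℝ) (u v : E3) :
    HasGradientAt (fun y : E3 => -K * (a * ‖y‖ ^ 2 - b * ⟪y, u⟫ ^ 2))
      ((-K) • ((2 * a) • v - (2 * b * ⟪v, u⟫) • u)) v := by
  rw [hasGradientAt_iff_hasFDerivAt]
  have h0 : HasFDerivAt (fun y : E3 => ⟪u, y⟫) (innerSL ℝ u) v :=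
    (innerSL ℝ u).hasFDerivAt (x := v)
  have h := (((hasStrictFDerivAt_norm_sq v).hasFDerivAt.const_mul a).sub
    ((h0.pow 2).const_mul b)).const_mul (-K)
  simp only [real_inner_comm u]
  refine (h.congr_fderiv ?_)
  ext y
  simp only [InnerProductSpace.toDual_apply_apply, real_inner_smul_left, inner_sub_left]
  simp [-mul_eq_mul_left_iff, -neg_mul, -neg_inj, real_inner_comm]
  try ring

lemma sum_sgnc {N : ℕ} (i j : Fin N) (F : Fin N → ℝ) :
    ∑ k, sgnc i j k * F k = F i - F j := by
  simp [sgnc, sub_mul, Finset.sum_sub_distrib]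

lemma poisson_kin {N : ℕ} (m : Fin N → ℝ) (hm : ∀ i, 0 < m i) (i j : Fin N) (A : Phase N → ℝ)
    (f : E3 → E3 → ℝ) (hA : ∀ w, relPos i j w ≠ 0 → A w = f (relPos i j w) (relVel m i j w))
    (w : Phase N) (hw : relPos i j w ≠ 0) (g : E3)
    (hg : HasGradientAt (fun u => f u (relVel m i j w)) g (relPos i j w)) :
    poisson A (kinetic m) w = ⟪g, relVel m i j w⟫ := by
  unfold poisson
  simp only [gradPos_kinetic, gradMom_kinetic m hm, gradPos_rel m i j _ A f hA w hw g hg,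
    inner_zero_right, sub_zero, real_inner_smul_left]
  rw [sum_sgnc i j (fun k => ⟪g, (m k)⁻¹ • w.2 k⟫), ← inner_sub_right]
  rfl

/-- The pair potential as a function of relative coordinates. -/
def potF (K : ℝ) (u _v : E3) : ℝ := -K / ‖u‖

lemma pairPot_rel {N : ℕ} (G : ℝ) (m : Fin N → ℝ) (i j : Fin N) (w : Phase N) :
    pairPot G m i j w = potF (G * m i * m j) (relPos i j w) (relVel m i j w) := rfl

lemma poisson_kin_pot {N : ℕ} (G : ℝ) (m : Fin N → ℝ) (hm : ∀ i, 0 < m i) (i j : Fin N)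
    (w : Phase N) (hw : relPos i j w ≠ 0) :
    poisson (kinetic m) (pairPot G m i j) w
      = -(G * m i * m j) * (⟪relVel m i j w, relPos i j w⟫ * (‖relPos i j w‖ ^ 3)⁻¹) := by
  have h := poisson_kin m hm i j (pairPot G m i j) (potF (G * m i * m j)) (fun w _ => pairPot_rel G m i j w) w hw _
    (grad_pot _ _ hw)
  have e : poisson (kinetic m) (pairPot G m i j) w = -poisson (pairPot G m i j) (kinetic m) w := by
    unfold poisson
    rw [← Finset.sum_neg_distrib]
    refine Finset.sum_congr rfl fun k _ => ?_
    rw [real_inner_comm, real_inner_comm (gradPos (pairPot G m i j) k w)]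
    ring
  rw [e, h, real_inner_smul_left, real_inner_comm]
  ring

lemma poisson_pot {N : ℕ} (G : ℝ) (m : Fin N → ℝ) (i j : Fin N) (hij : i ≠ j) (A : Phase N → ℝ)
    (f : E3 → E3 → ℝ) (hA : ∀ w, relPos i j w ≠ 0 → A w = f (relPos i j w) (relVel m i j w))
    (w : Phase N) (hw : relPos i j w ≠ 0) (g : E3)
    (hg : HasGradientAt (fun v => f (relPos i j w) v) g (relVel m i j w)) :
    poisson A (pairPot G m i j) w
      = -(((m i)⁻¹ + (m j)⁻¹) * (G * m i * m j * (‖relPos i j w‖ ^ 3)⁻¹)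
          * ⟪g, relPos i j w⟫) := by
  unfold poisson
  have h1 : ∀ k, gradMom (pairPot G m i j) k w = 0 := fun k => by
    rw [gradMom_rel m i j k _ (potF (G * m i * m j)) (fun w _ => pairPot_rel G m i j w) w hw 0
      (hasGradientAt_const _ _), smul_zero]
  have h2 : ∀ k, gradPos (pairPot G m i j) k w = _ := fun k =>
    gradPos_rel m i j k _ (potF (G * m i * m j)) (fun w _ => pairPot_rel G m i j w) w hw _ (grad_pot _ _ hw)
  simp only [h1, h2, gradMom_rel m i j _ A f hA w hw g hg,
    inner_zero_right, zero_sub, real_inner_smul_left, real_inner_smul_right, mul_assoc]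
  rw [Finset.sum_neg_distrib, sum_sgnc i j]
  simp only [sgnc, hij, hij.symm, if_true, if_false]
  ring

/-- Fourth-order two-body error term (paper eq. A17c):
`{{{{T,V_ij},T},V_ij},T} = 4 (G² m_i m_j (m_i + m_j) / r_ij⁸)
  (6 (v_ij·x_ij)² − r_ij² v_ij²)`. -/
theorem fourth_order_TVTVT {N : ℕ} (G : ℝ) (hG : 0 < G) (m : Fin N → ℝ)
    (hm : ∀ i, 0 < m i) (i j : Fin N) (hij : i ≠ j) (w : Phase N)
    (hr : ‖w.1 i - w.1 j‖ ≠ 0) (xij vij : E3)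
    (hx : xij = w.1 i - w.1 j)
    (hv : vij = (m i)⁻¹ • w.2 i - (m j)⁻¹ • w.2 j) :
    poisson (poisson (poisson (poisson (kinetic m) (pairPot G m i j))
        (kinetic m)) (pairPot G m i j)) (kinetic m) w =
      4 * (G ^ 2 * m i * m j * (m i + m j) / ‖xij‖ ^ 8) *
        (6 * ⟪vij, xij⟫ ^ 2 - ‖xij‖ ^ 2 * ‖vij‖ ^ 2) := by
  have hw : relPos i j w ≠ 0 := by
    simpa [relPos] using hr
  set K : ℝ := G * m i * m j with hK
  have hA1 := fun w hw => poisson_kin_pot G m hm i j w hw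
  have hA2 : ∀ w, relPos i j w ≠ 0 →
      poisson (poisson (kinetic m) (pairPot G m i j)) (kinetic m) w
      = (fun u v => -K * ((‖u‖ ^ 3)⁻¹ * ‖v‖ ^ 2 - 3 * (‖u‖ ^ 5)⁻¹ * ⟪v, u⟫ ^ 2) :
          E3 → E3 → ℝ) (relPos i j w) (relVel m i j w) := by
    intro w hw
    rw [poisson_kin m hm i j _ (fun u v => -K * (⟪v, u⟫ * (‖u‖ ^ 3)⁻¹)) hA1 w hw _
      (grad_u _ 3 _ _ hw)]
    simp only [real_inner_smul_left, inner_sub_left, real_inner_self_eq_norm_sq]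
    rw [real_inner_comm (relVel m i j w) (relPos i j w)]
    push_cast
    ring
  have hA3 : ∀ w, relPos i j w ≠ 0 →
      poisson (poisson (poisson (kinetic m) (pairPot G m i j)) (kinetic m)) (pairPot G m i j) w
      = (fun u v => (-4 * K ^ 2 * ((m i)⁻¹ + (m j)⁻¹)) * (⟪v, u⟫ * (‖u‖ ^ 6)⁻¹) :
          E3 → E3 → ℝ) (relPos i j w) (relVel m i j w) := by
    intro w hw
    rw [poisson_pot G m i j hij _ (fun u v => -K * ((‖u‖ ^ 3)⁻¹ * ‖v‖ ^ 2
      - 3 * (‖u‖ ^ 5)⁻¹ * ⟪v, u⟫ ^ 2)) hA2 w hw _ (grad_v _ _ _ _ _)]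
    have hn : ‖relPos i j w‖ ≠ 0 := by simpa using hw
    simp only [real_inner_smul_left, inner_sub_left, real_inner_self_eq_norm_sq, ← hK]
    field_simp
    ring
  rw [poisson_kin m hm i j _ (fun u v => (-4 * K ^ 2 * ((m i)⁻¹ + (m j)⁻¹)) *
      (⟪v, u⟫ * (‖u‖ ^ 6)⁻¹)) hA3 w hw _ (grad_u _ 6 _ _ hw)]
  have ex : relPos i j w = xij := hx.symm
  have ev : relVel m i j w = vij := hv.symm
  have hn : ‖xij‖ ≠ 0 := by rw [hx]; exact hr
  have hi := (hm i).ne'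
  have hj := (hm j).ne'
  rw [ex, ev]
  simp only [real_inner_smul_left, inner_sub_left, real_inner_self_eq_norm_sq]
  rw [real_inner_comm vij xij, hK]
  push_cast
  field_simp
  ring
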